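/- Let F = {f_i : B_i → int(B)} be a locally contractive piecewise continuous map on (B,{B_i}) with the separation property. Then the set K₀ = ∩_{k≥1} F^k(B) is nonempty, compact, and totally disconnected. -/

import Mathlib

/-!
The iterates `F^k(B)` are a decreasing sequence of nonempty compact sets (`isCompact_iterSet`,
`iterSet_succ_subset`, `iterSet_nonempty`), so Cantor's intersection theorem gives nonemptiness
and compactness of `K₀`.

For total disconnectedness, `dist_le_of_isPreconnected_subset_iterSet` shows that a preconnected
subset `s` of `F^k(B)` has diameter at most `λ^k · diam B`, by induction on `k`. By separation
`F(B)` is a finite disjoint union of the compact sets `f_i(B_i)`, so a preconnected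
`s ⊆ F^(k+1)(B)` lies in a single one of them. The homeomorphism `f_i⁻¹` carries it to a
preconnected subset of `B_i ∩ F^k(B)`, to which the induction hypothesis applies, and `f_i`
contracts by `λ`. A preconnected subset of `K₀` therefore has diameter zero.
-/

/-!
Common definitions for "Topological dynamics of generic piecewise continuous
contractive maps in n dimensions" (Catsigeras–Budelli).

`X` plays the role of the compact set `B ⊆ ℝⁿ` (homeomorphic to a compact ball),
endowed with a metric `dist` inducing its subspace topology: we model this by a
metric space `X` together with a topological embedding `j : X → ℝⁿ` and a
homeomorphism of `X` with the closed unit ball.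
-/

namespace PWC

variable {X : Type} [MetricSpace X]

/-- A finite partition of the space `X` (the ball `B`): `m` nonempty compact pieces
covering `X`, with pairwise disjoint interiors. -/
def IsFinPartition {m : ℕ} (P : Fin m → Set X) : Prop :=
  (∀ i, (P i).Nonempty) ∧ (∀ i, IsCompact (P i)) ∧ (⋃ i, P i) = Set.univ ∧
    ∀ i j : Fin m, i ≠ j → interior (P i) ∩ interior (P j) = ∅

/-- The separation line `S = ⋃ i ∂B_i` (frontiers taken in `B`). -/
def sepLine {m : ℕ} (P : Fin m → Set X) : Set X := ⋃ i, frontier (P i)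

/-- A piecewise continuous map on `(B, {B_i})`: each `f i` is a homeomorphism of the
piece `P i` onto its image, and the image is contained in the interior of `B`
(i.e. of `Set.range j`) in `ℝⁿ`. -/
def IsPCMap {n m : ℕ} (j : X → EuclideanSpace ℝ (Fin n)) (P : Fin m → Set X)
    (f : Fin m → X → X) : Prop :=
  ∀ i, ContinuousOn (f i) (P i) ∧ Set.InjOn (f i) (P i) ∧
    (∃ finv : X → X, ContinuousOn finv (f i '' P i) ∧ ∀ x ∈ P i, finv (f i x) = x) ∧
    ∀ x ∈ P i, j (f i x) ∈ interior (Set.range j)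

/-- The separation property: different continuity pieces have disjoint images. -/
def SepProp {m : ℕ} (P : Fin m → Set X) (f : Fin m → X → X) : Prop :=
  ∀ i i' : Fin m, i ≠ i' → (f i '' P i) ∩ (f i' '' P i') = ∅

/-- `F` is uniformly locally contractive with contraction rate `lam ∈ (0,1)`. -/
def LocContr {m : ℕ} (P : Fin m → Set X) (f : Fin m → X → X) (lam : ℝ) : Prop :=
  0 < lam ∧ lam < 1 ∧ ∀ i, ∀ x ∈ P i, ∀ y ∈ P i, dist (f i x) (f i y) ≤ lam * dist x y

/-- Image of a set: `F(H) = ⋃_{x ∈ H} {f i x : x ∈ B_i}`. -/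
def setImage {m : ℕ} (P : Fin m → Set X) (f : Fin m → X → X) (H : Set X) : Set X :=
  ⋃ i, f i '' (P i ∩ H)

/-- Iterated image: `F⁰(H) = H`, `F^{k+1}(H) = F^k(F(H)) = F(F^k(H))`. -/
def iterSet {m : ℕ} (P : Fin m → Set X) (f : Fin m → X → X) : ℕ → Set X → Set X
  | 0, H => H
  | k + 1, H => setImage P f (iterSet P f k H)

/-- A future orbit: `o (k+1) ∈ F (o k)` for all `k`. -/
def IsOrbit {m : ℕ} (P : Fin m → Set X) (f : Fin m → X → X) (o : ℕ → X) : Prop :=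
  ∀ k : ℕ, ∃ i, o k ∈ P i ∧ o (k + 1) = f i (o k)

/-- The limit set of a sequence: points which are limits of some subsequence. -/
def orbitLimit (o : ℕ → X) : Set X :=
  {y | ∃ φ : ℕ → ℕ, StrictMono φ ∧ Filter.Tendsto (fun k => o (φ k)) Filter.atTop (nhds y)}

/-- The limit set `L⁺(F)`: union of the limit sets of all future orbits of all points. -/
def limitSet {m : ℕ} (P : Fin m → Set X) (f : Fin m → X → X) : Set X :=
  ⋃ o ∈ {o : ℕ → X | IsOrbit P f o}, orbitLimit o

/-- `L` is a periodic orbit (limit cycle) of minimal period `p ≥ 1` of `F`. -/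
def IsPeriodicOrbit {m : ℕ} (P : Fin m → Set X) (f : Fin m → X → X) (L : Set X)
    (p : ℕ) : Prop :=
  1 ≤ p ∧ ∃ o : ℕ → X, IsOrbit P f o ∧ (∀ k, o (k + p) = o k) ∧
    (∀ q : ℕ, 1 ≤ q → (∀ k, o (k + q) = o k) → p ≤ q) ∧ L = Set.range o

/-- `F` is finally periodic: its limit set is the union of (at least one and) finitely
many periodic orbits. -/
def FinallyPeriodic {m : ℕ} (P : Fin m → Set X) (f : Fin m → X → X) : Prop :=
  ∃ (N : ℕ) (L : Fin N → Set X) (p : Fin N → ℕ), 1 ≤ N ∧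
    (∀ a, IsPeriodicOrbit P f (L a) (p a)) ∧ limitSet P f = ⋃ a, L a

/-- `G = {g_i : A_i → B}` (with contraction rate `lamG`) is an `ε`-perturbation of
`F = {f_i : B_i → B}` (with contraction rate `lamF`). -/
def IsPerturbation {m : ℕ} (P : Fin m → Set X) (f : Fin m → X → X) (lamF : ℝ)
    (Q : Fin m → Set X) (g : Fin m → X → X) (lamG : ℝ) (ε : ℝ) : Prop :=
  (∀ i, ∀ x ∈ P i ∩ Q i, dist (f i x) (g i x) < ε) ∧ |lamF - lamG| < ε ∧
    ∀ i, Metric.hausdorffDist (P i) (Q i) < ε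

/-- The limit cycles `L a` (of periods `p a`) of `F` are persistent. -/
def PersistentCycles {n m : ℕ} (j : X → EuclideanSpace ℝ (Fin n)) (P : Fin m → Set X)
    (f : Fin m → X → X) (lamF : ℝ) {N : ℕ} (L : Fin N → Set X) (p : Fin N → ℕ) : Prop :=
  ∀ εs : ℝ, 0 < εs → ∃ ε : ℝ, 0 < ε ∧
    ∀ (Q : Fin m → Set X) (g : Fin m → X → X) (lamG : ℝ),
      IsFinPartition Q → IsPCMap j Q g → LocContr Q g lamG →
      IsPerturbation P f lamF Q g lamG ε →
      ∃ LG : Fin N → Set X, (∀ a, IsPeriodicOrbit Q g (LG a) (p a)) ∧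
        limitSet Q g = (⋃ a, LG a) ∧ ∀ a, Metric.hausdorffDist (LG a) (L a) < εs

/-- `F` is finally periodic with persistent limit cycles. -/
def FPwithPersistent {n m : ℕ} (j : X → EuclideanSpace ℝ (Fin n)) (P : Fin m → Set X)
    (f : Fin m → X → X) (lamF : ℝ) : Prop :=
  ∃ (N : ℕ) (L : Fin N → Set X) (p : Fin N → ℕ), 1 ≤ N ∧
    (∀ a, IsPeriodicOrbit P f (L a) (p a)) ∧ limitSet P f = (⋃ a, L a) ∧
    PersistentCycles j P f lamF L p

/-- The atom of generation `w.length` with word `w`; the head of the list is the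
*last* map applied, i.e. `atom [i_k, …, i_1] = f_{i_k} ∘ ⋯ ∘ f_{i_1} (B_{i_1})`,
restricted to the set where the composition is defined. -/
def atom {m : ℕ} (P : Fin m → Set X) (f : Fin m → X → X) : List (Fin m) → Set X
  | [] => Set.univ
  | i :: w => f i '' (P i ∩ atom P f w)

end PWC


open PWC

section Helpers

variable {X : Type} [MetricSpace X] {m : ℕ} {P : Fin m → Set X} {f : Fin m → X → X}

lemma setImage_mono {H H' : Set X} (h : H ⊆ H') : setImage P f H ⊆ setImage P f H' :=
  Set.iUnion_mono fun _ => Set.image_mono (Set.inter_subset_inter_right _ h)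

lemma iterSet_succ_subset (k : ℕ) :
    iterSet P f (k + 1) Set.univ ⊆ iterSet P f k Set.univ := by
  induction k with
  | zero => exact Set.subset_univ _
  | succ k ih => exact setImage_mono ih

lemma isCompact_iterSet [CompactSpace X] (hP : ∀ i, IsCompact (P i))
    (hf : ∀ i, ContinuousOn (f i) (P i)) (k : ℕ) : IsCompact (iterSet P f k Set.univ) := by
  induction k with
  | zero => exact isCompact_univ
  | succ k ih =>
    exact isCompact_iUnion fun i =>
      ((hP i).inter ih).image_of_continuousOn ((hf i).mono Set.inter_subset_left)

lemma iterSet_nonempty [Nonempty X] (hP : (⋃ i, P i) = Set.univ) (k : ℕ) :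
    (iterSet P f k Set.univ).Nonempty := by
  induction k with
  | zero => exact Set.univ_nonempty
  | succ k ih =>
    obtain ⟨x, hx⟩ := ih
    obtain ⟨i, hi⟩ := Set.mem_iUnion.1 (hP.symm ▸ Set.mem_univ x : x ∈ ⋃ i, P i)
    exact ⟨f i x, Set.mem_iUnion.2 ⟨i, x, ⟨hi, hx⟩, rfl⟩⟩

/-- A preconnected set covered by finitely many pairwise disjoint closed sets lies in the one
containing any of its points. -/
lemma subset_of_isPreconnected_of_disjoint_closed {C : Fin m → Set X} (hC : ∀ i, IsClosed (C i))
    (hdisj : ∀ i i', i ≠ i' → C i ∩ C i' = ∅) {s : Set X} (hs : IsPreconnected s)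
    (hsC : s ⊆ ⋃ i, C i) {x : X} (hx : x ∈ s) {i : Fin m} (hxi : x ∈ C i) : s ⊆ C i := by
  have hempty : C i ∩ (⋃ i' : {i' // i' ≠ i}, C i') = ∅ := by
    rw [Set.inter_iUnion, Set.iUnion_eq_empty]
    exact fun i' => hdisj i i' i'.2.symm
  have hcover : s ⊆ C i ∪ ⋃ i' : {i' // i' ≠ i}, C i' := by
    intro y hy
    obtain ⟨i', hi'⟩ := Set.mem_iUnion.1 (hsC hy)
    by_cases h : i' = i
    · exact Or.inl (h ▸ hi')
    · exact Or.inr (Set.mem_iUnion.2 ⟨⟨i', h⟩, hi'⟩)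
  rcases isPreconnected_iff_subset_of_disjoint_closed.1 hs _ _ (hC i)
    (isClosed_iUnion_of_finite fun i' : {i' // i' ≠ i} => hC i') hcover
    (by rw [hempty, Set.inter_empty]) with h | h
  · exact h
  · exact absurd (show x ∈ C i ∩ _ from ⟨hxi, h hx⟩) (by rw [hempty]; exact Set.notMem_empty x)

/-- Preconnected subsets of `F^k(B)` have diameter at most `λ^k · diam B`. -/
lemma dist_le_of_isPreconnected_subset_iterSet [CompactSpace X] {n : ℕ}
    {j : X → EuclideanSpace ℝ (Fin n)} {lam : ℝ} (hP : ∀ i, IsCompact (P i))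
    (hf : IsPCMap j P f) (hlc : LocContr P f lam) (hsep : SepProp P f) (k : ℕ) :
    ∀ s : Set X, IsPreconnected s → s ⊆ iterSet P f k Set.univ →
      ∀ x ∈ s, ∀ y ∈ s, dist x y ≤ lam ^ k * Metric.diam (Set.univ : Set X) := by
  induction k with
  | zero =>
    intro s _ _ x _ y _
    rw [pow_zero, one_mul]
    exact Metric.dist_le_diam_of_mem isCompact_univ.isBounded (Set.mem_univ x) (Set.mem_univ y)
  | succ k ih =>
    intro s hs hsub x hx y hy
    obtain ⟨i, u, ⟨hui, -⟩, hux⟩ := Set.mem_iUnion.1 (hsub hx)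
    have hsi : s ⊆ f i '' P i :=
      subset_of_isPreconnected_of_disjoint_closed (C := fun i => f i '' P i)
        (fun i => ((hP i).image_of_continuousOn (hf i).1).isClosed) hsep hs
        (hsub.trans (Set.iUnion_mono fun _ => Set.image_mono Set.inter_subset_left))
        hx ⟨u, hui, hux⟩
    obtain ⟨finv, hcont, hinv⟩ := (hf i).2.2.1
    -- By separation, the point of `F^k(B)` that `F` sends to `z ∈ s` is `f_i⁻¹ z`.
    have key : ∀ z ∈ s, finv z ∈ P i ∧ finv z ∈ iterSet P f k Set.univ ∧ f i (finv z) = z := by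
      intro z hz
      obtain ⟨i', w, ⟨hwi, hwk⟩, hwz⟩ := Set.mem_iUnion.1 (hsub hz)
      have hii : i' = i := by
        by_contra hne
        exact Set.eq_empty_iff_forall_notMem.1 (hsep i' i hne) z ⟨⟨w, hwi, hwz⟩, hsi hz⟩
      subst hii
      rw [← hwz, hinv w hwi]
      exact ⟨hwi, hwk, rfl⟩
    have hpre : IsPreconnected (finv '' s) := hs.image finv (hcont.mono hsi)
    have hle := ih (finv '' s) hpre (Set.image_subset_iff.2 fun z hz => (key z hz).2.1)
      (finv x) (Set.mem_image_of_mem _ hx) (finv y) (Set.mem_image_of_mem _ hy)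
    have hc := hlc.2.2 i (finv x) (key x hx).1 (finv y) (key y hy).1
    rw [(key x hx).2.2, (key y hy).2.2] at hc
    calc dist x y ≤ lam * dist (finv x) (finv y) := hc
      _ ≤ lam * (lam ^ k * Metric.diam (Set.univ : Set X)) :=
        mul_le_mul_of_nonneg_left hle hlc.1.le
      _ = lam ^ (k + 1) * Metric.diam (Set.univ : Set X) := by ring

end Helpers

/-- For a locally contractive piecewise continuous map with the
separation property, `K₀ = ⋂_{k ≥ 1} F^k(B)` is nonempty, compact and totally
disconnected. -/
theorem inter_iterates_nonempty_compact_totallyDisconnected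
    {n m : ℕ} {X : Type} [MetricSpace X]
    (j : X → EuclideanSpace ℝ (Fin n))
    (hj : Topology.IsEmbedding j)
    (hball : Nonempty (X ≃ₜ (Metric.closedBall (0 : EuclideanSpace ℝ (Fin n)) 1)))
    (P : Fin m → Set X) (f : Fin m → X → X) (lamF : ℝ)
    (hP : IsFinPartition P) (hf : IsPCMap j P f) (hlc : LocContr P f lamF)
    (hsep : SepProp P f) :
    (⋂ (k : ℕ) (_ : 1 ≤ k), iterSet P f k Set.univ).Nonempty ∧
    IsCompact (⋂ (k : ℕ) (_ : 1 ≤ k), iterSet P f k Set.univ) ∧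
    IsTotallyDisconnected (⋂ (k : ℕ) (_ : 1 ≤ k), iterSet P f k Set.univ) := by
  obtain ⟨e⟩ := hball
  have : CompactSpace (Metric.closedBall (0 : EuclideanSpace ℝ (Fin n)) 1) :=
    isCompact_iff_compactSpace.1 (isCompact_closedBall 0 1)
  have : CompactSpace X := e.symm.compactSpace
  have : Nonempty X := ⟨e.symm ⟨0, Metric.mem_closedBall_self zero_le_one⟩⟩
  have hcomp := isCompact_iterSet hP.2.1 fun i => (hf i).1
  refine ⟨?_, ?_, ?_⟩
  · obtain ⟨x, hx⟩ := IsCompact.nonempty_iInter_of_sequence_nonempty_isCompact_isClosed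
      (fun k => iterSet P f k Set.univ) iterSet_succ_subset (iterSet_nonempty hP.2.2.1)
      (hcomp 0) fun k => (hcomp k).isClosed
    exact ⟨x, Set.mem_iInter₂.2 fun k _ => Set.mem_iInter.1 hx k⟩
  · exact (isClosed_biInter fun k _ => (hcomp k).isClosed).isCompact
  · intro s hsK hs x hx y hy
    have hbound : ∀ k : ℕ, dist x y ≤ lamF ^ (k + 1) * Metric.diam (Set.univ : Set X) :=
      fun k => dist_le_of_isPreconnected_subset_iterSet hP.2.1 hf hlc hsep (k + 1) s hs
        (hsK.trans (Set.biInter_subset_of_mem (Nat.le_add_left 1 k))) x hx y hy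
    have hlim : Filter.Tendsto (fun k : ℕ => lamF ^ (k + 1) * Metric.diam (Set.univ : Set X))
        Filter.atTop (nhds 0) := by
      simpa using ((Filter.tendsto_add_atTop_iff_nat 1).2
        (tendsto_pow_atTop_nhds_zero_of_lt_one hlc.1.le hlc.2.1)).mul_const
          (Metric.diam (Set.univ : Set X))
    exact dist_le_zero.1 (ge_of_tendsto' hlim hbound)
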